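/- Let r > r₀ > 0 and P ⊂ ℝ² finite with circumradius r₀. Then V₁(S_{r,r₀,2}) ≤ V₁(conv_r P); i.e., among planar r-ball convex hulls of sets of circumradius r₀, the r-spindle has the smallest perimeter. -/

import Mathlib

open Metric Set MeasureTheory Pointwise RealInnerProductSpace

variable {d : ℕ}

/-- The `r`-ball body generated by `X`: the intersection of all closed balls of
radius `r` centered at points of `X`. -/
def ballBody (r : ℝ) (X : Set (EuclideanSpace ℝ (Fin d))) :
    Set (EuclideanSpace ℝ (Fin d)) :=
  ⋂ x ∈ X, closedBall x r

/-- The `r`-ball convex hull of `X`: the intersection of all closed balls of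
radius `r` containing `X`. -/
def ballHull (r : ℝ) (X : Set (EuclideanSpace ℝ (Fin d))) :
    Set (EuclideanSpace ℝ (Fin d)) :=
  ⋂ y ∈ {y : EuclideanSpace ℝ (Fin d) | X ⊆ closedBall y r}, closedBall y r

/-- Volume of the m-dimensional unit ball. -/
noncomputable def unitBallVol (m : ℕ) : ℝ :=
  (volume (closedBall (0 : EuclideanSpace ℝ (Fin m)) 1)).toReal

/-- `V` is a system of intrinsic volumes on `ℝ^d`, i.e. it satisfies the Steiner
formula for all convex bodies. -/
def IsIntrinsicVolumes (d : ℕ)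
    (V : ℕ → Set (EuclideanSpace ℝ (Fin d)) → ℝ) : Prop :=
  ∀ A : Set (EuclideanSpace ℝ (Fin d)), Convex ℝ A → IsCompact A → A.Nonempty →
    (∀ ε : ℝ, 0 < ε →
      (volume (A + ε • closedBall (0 : EuclideanSpace ℝ (Fin d)) 1)).toReal =
        ∑ i ∈ Finset.range (d + 1), unitBallVol (d - i) * V i A * ε ^ (d - i)) ∧
    V 0 A = 1

/-!
By Cauchy's formula `2 * V 1 K` is the integral of the support function of `K` over all directions;
it falls out of comparing the coefficients of `ε` in the Steiner formula with those of the polar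
volume of `K + ε B` as `ε → ∞`.

Write `r₀ = r * k` and let `c` be the circumcentre of `P`. The contact points of `P` with the
circumcircle do not lie in an open half-circle, so they cut the circle into sectors of angle
`2 * α ≤ π`. The `r`-ball hull contains the arc of radius `r` joining the two ends of such a sector,
and so the support function relative to `c` integrates over the sector to at least the contribution
`2 * r * arcsin (k * sin α)` of that arc. As a function of `α ∈ [0, π / 2]` this is concave and
vanishes at `0`, hence is at least the proportional share `(2 * α / π) * (2 * r * arcsin k)`, and
the shares sum to `4 * r * arcsin k`. For the spindle there are exactly two sectors, both with
`α = π / 2`, and equality holds throughout.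
-/

section

open Real Filter Topology

lemma exists_mem_le_dist {E : Type*} [PseudoMetricSpace E] {P : Set E} (hP : IsCompact P)
    {ρ : ℝ} (hρ : ∀ z s, P ⊆ closedBall z s → ρ ≤ s) (z : E) : ∃ p ∈ P, ρ ≤ dist p z := by
  have hne : P.Nonempty := by
    by_contra! h
    linarith [hρ z (ρ - 1) (h ▸ empty_subset _)]
  obtain ⟨p, hp, hmax⟩ := hP.exists_isMaxOn hne (f := (dist · z)) (by fun_prop)
  exact ⟨p, hp, hρ z _ fun q hq => hmax hq⟩

section InnerProductSpace

variable {E : Type*} [NormedAddCommGroup E] [InnerProductSpace ℝ E]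

/-- The support function `h_K(u) = sup {⟪y, u⟫ | y ∈ K}` of a set `K`, defined for every vector `u`
but only used for unit vectors. Its value is the junk value `0` if `K` is empty or unbounded in the
direction `u`. -/
noncomputable def supportFun (K : Set E) (u : E) : ℝ :=
  sSup ((⟪·, u⟫) '' K)

lemma continuous_supportFun {K : Set E} (hK : IsCompact K) : Continuous (supportFun K) :=
  hK.continuous_sSup (f := fun u y => ⟪y, u⟫) (continuous_snd.inner continuous_fst)

lemma inner_le_supportFun {K : Set E} (hK : IsCompact K) {y : E} (hy : y ∈ K) (u : E) :
    ⟪y, u⟫ ≤ supportFun K u :=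
  le_csSup (hK.image (by fun_prop)).bddAbove ⟨y, hy, rfl⟩

lemma inner_le_supportFun_sub_of_add_mem {K : Set E} (hK : IsCompact K) {c v : E}
    (hv : c + v ∈ K) (u : E) : ⟪v, u⟫ ≤ supportFun K u - ⟪c, u⟫ := by
  have := inner_le_supportFun hK hv u
  rw [inner_add_left] at this
  linarith

lemma exists_inner_eq_supportFun {K : Set E} (hK : IsCompact K) (hne : K.Nonempty) (u : E) :
    ∃ y ∈ K, ⟪y, u⟫ = supportFun K u :=
  (hK.image (f := (⟪·, u⟫)) (by fun_prop)).sSup_mem (hne.image _)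

lemma abs_supportFun_le {K : Set E} (hK : IsCompact K) (hne : K.Nonempty) {R : ℝ}
    (hR : ∀ y ∈ K, ‖y‖ ≤ R) {u : E} (hu : ‖u‖ = 1) : |supportFun K u| ≤ R := by
  obtain ⟨y, hy, hyu⟩ := exists_inner_eq_supportFun hK hne u
  calc |supportFun K u| ≤ ‖y‖ * ‖u‖ := hyu ▸ abs_real_inner_le_norm y u
    _ ≤ R := by simpa [hu] using hR y hy

lemma inner_le_of_mem_closedBall {y z u : E} {r : ℝ} (hy : y ∈ closedBall z r) (hu : ‖u‖ = 1) :
    ⟪y, u⟫ ≤ ⟪z, u⟫ + r := by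
  have h : ⟪y - z, u⟫ ≤ r := by
    simpa [hu] using (real_inner_le_norm (y - z) u).trans
      (mul_le_mul_of_nonneg_right (mem_closedBall_iff_norm.1 hy) (norm_nonneg u))
  rw [inner_sub_left] at h
  linarith

lemma inner_le_supportFun_add_of_mem_add {K : Set E} (hK : IsCompact K) {ε : ℝ} {z u : E}
    (hz : z ∈ K + closedBall 0 ε) (hu : ‖u‖ = 1) : ⟪z, u⟫ ≤ supportFun K u + ε := by
  obtain ⟨y, hy, w, hw, rfl⟩ := hz
  have hwu := inner_le_of_mem_closedBall hw hu
  rw [inner_zero_left, zero_add] at hwu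
  rw [inner_add_left]
  exact add_le_add (inner_le_supportFun hK hy u) hwu

-- If `y` is a point of `K` extremal in the direction `u`, then `t • u` lies at distance at most `R`
-- from the line through `y` in the direction `u`, which costs at most `R ^ 2 / ε` of the radius `ε`
-- by Pythagoras.
lemma smul_mem_add_closedBall {K : Set E} (hK : IsCompact K) (hne : K.Nonempty) {R ε t : ℝ}
    (hR : ∀ y ∈ K, ‖y‖ ≤ R) (hε : 0 < ε) (hRε : 2 * R ≤ ε) {u : E} (hu : ‖u‖ = 1) (ht : 0 ≤ t)
    (htε : t ≤ ε + supportFun K u - R ^ 2 / ε) : t • u ∈ K + closedBall 0 ε := by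
  obtain ⟨y, hy, hyu⟩ := exists_inner_eq_supportFun hK hne u
  have hyR := hR y hy
  have hR0 : 0 ≤ R := (norm_nonneg y).trans hyR
  have hsupp := abs_le.1 (abs_supportFun_le hK hne hR hu)
  set δ := R ^ 2 / ε
  have hεδ : ε * δ = R ^ 2 := mul_div_cancel₀ _ hε.ne'
  have hδR : δ ≤ R / 2 := by
    rw [div_le_iff₀ hε]
    nlinarith
  have hδ : 0 ≤ δ := by positivity
  have hsq : (t - supportFun K u) ^ 2 ≤ (ε - δ) ^ 2 :=
    sq_le_sq' (by linarith) (by linarith)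
  refine ⟨y, hy, t • u - y, ?_, add_sub_cancel _ _⟩
  rw [mem_closedBall_zero_iff]
  refine le_of_sq_le_sq ?_ hε.le
  calc ‖t • u - y‖ ^ 2 = (t - supportFun K u) ^ 2 + ‖y‖ ^ 2 - supportFun K u ^ 2 := by
        rw [norm_sub_sq_real, norm_smul, hu, real_inner_smul_left, real_inner_comm, hyu, mul_one,
          Real.norm_eq_abs, sq_abs]
        ring
    _ ≤ (ε - δ) ^ 2 + R ^ 2 := by
        have : ‖y‖ ^ 2 ≤ R ^ 2 := by gcongr
        linarith [sq_nonneg (supportFun K u)]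
    _ ≤ ε ^ 2 := by nlinarith

-- Otherwise, moving the centre slightly in the direction `-u` would make room for a smaller ball.
lemma exists_mem_dist_eq_inner_nonneg {P : Set E} (hP : IsCompact P) {ρ : ℝ}
    (hρ : ∀ z s, P ⊆ closedBall z s → ρ ≤ s) {c : E} (hc : P ⊆ closedBall c ρ) (u : E) :
    ∃ p ∈ P, dist p c = ρ ∧ 0 ≤ ⟪p - c, u⟫ := by
  let t : ℕ → ℝ := fun n => 1 / ((n : ℝ) + 1)
  choose p hpP hp using fun n => exists_mem_le_dist hP hρ (c - t n • u)
  have hinner (n : ℕ) : 0 ≤ 2 * ⟪p n - c, u⟫ + t n * ‖u‖ ^ 2 := by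
    have ht : 0 < t n := Nat.one_div_pos_of_nat
    have hsq : ρ ^ 2 ≤ ‖p n - c + t n • u‖ ^ 2 := by
      have hρ0 : 0 ≤ ρ := dist_nonneg.trans (hc (hpP n))
      have := hp n
      rw [dist_eq_norm, sub_sub_eq_add_sub, add_sub_right_comm] at this
      gcongr
    have hpc : ‖p n - c‖ ^ 2 ≤ ρ ^ 2 := by
      have := mem_closedBall_iff_norm.1 (hc (hpP n))
      gcongr
    rw [norm_add_sq_real, norm_smul, real_inner_smul_right, Real.norm_of_nonneg ht.le] at hsq
    exact nonneg_of_mul_nonneg_right (by linarith) ht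
  obtain ⟨q, hq, φ, hφ, hlim⟩ := hP.tendsto_subseq hpP
  have htlim : Tendsto (t ∘ φ) atTop (𝓝 0) :=
    tendsto_one_div_add_atTop_nhds_zero_nat.comp hφ.tendsto_atTop
  refine ⟨q, hq, (hc hq).antisymm ?_, ?_⟩
  · have h : Tendsto (fun n => dist (p (φ n)) (c - t (φ n) • u)) atTop (𝓝 (dist q c)) := by
      simpa using hlim.dist (tendsto_const_nhds.sub (htlim.smul_const u))
    exact ge_of_tendsto' h fun n => hp (φ n)
  · have h : Tendsto (fun n => 2 * ⟪p (φ n) - c, u⟫ + t (φ n) * ‖u‖ ^ 2) atTop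
        (𝓝 (2 * ⟪q - c, u⟫)) := by
      simpa using (((hlim.sub_const c).inner tendsto_const_nhds).const_mul 2).add
        (htlim.mul_const (‖u‖ ^ 2))
    have := ge_of_tendsto' h fun n => hinner (φ n)
    linarith

end InnerProductSpace

section BallHull

variable {r : ℝ} {X : Set (EuclideanSpace ℝ (Fin d))}

lemma mem_ballHull {y : EuclideanSpace ℝ (Fin d)} :
    y ∈ ballHull r X ↔ ∀ z, X ⊆ closedBall z r → y ∈ closedBall z r :=
  mem_iInter₂

lemma subset_ballHull : X ⊆ ballHull r X :=
  fun _ hy => mem_ballHull.2 fun _ hz => hz hy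

lemma ballHull_closure : ballHull r (closure X) = ballHull r X := by
  simp only [ballHull, isClosed_closedBall.closure_subset_iff]

lemma convex_ballHull : Convex ℝ (ballHull r X) :=
  convex_iInter₂ fun z _ => convex_closedBall z r

lemma isCompact_ballHull {z : EuclideanSpace ℝ (Fin d)} (hz : X ⊆ closedBall z r) :
    IsCompact (ballHull r X) :=
  (isCompact_closedBall z r).of_isClosed_subset (isClosed_biInter fun _ _ => isClosed_closedBall)
    fun _ hy => mem_ballHull.1 hy z hz

lemma isCompact_ballHull_pair {x : EuclideanSpace ℝ (Fin d)} (hx : ‖x‖ ≤ r) :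
    IsCompact (ballHull r {x, -x}) :=
  isCompact_ballHull (z := 0) (pair_subset_iff.2 (by simpa using hx))

lemma supportFun_ballHull_le {z u : EuclideanSpace ℝ (Fin d)} (hz : X ⊆ closedBall z r)
    (hne : X.Nonempty) (hu : ‖u‖ = 1) : supportFun (ballHull r X) u ≤ ⟪z, u⟫ + r :=
  csSup_le ((hne.mono subset_ballHull).image _) <| forall_mem_image.2 fun _ hy =>
    inner_le_of_mem_closedBall (mem_ballHull.1 hy z hz) hu

-- The ball of radius `r` touching the supporting hyperplane at `x` from inside contains `-x`.
lemma supportFun_ballHull_pair_le_inner {x u : EuclideanSpace ℝ (Fin d)} (hr : 0 ≤ r)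
    (hu : ‖u‖ = 1) (hx : ‖x‖ ^ 2 ≤ r * ⟪x, u⟫) :
    supportFun (ballHull r {x, -x}) u ≤ ⟪x, u⟫ := by
  have hsub : {x, -x} ⊆ closedBall (x - r • u) r := by
    rw [pair_subset_iff, mem_closedBall_iff_norm, mem_closedBall_iff_norm]
    refine ⟨by simp [norm_smul, hu, abs_of_nonneg hr], le_of_sq_le_sq ?_ hr⟩
    rw [show -x - (x - r • u) = r • u - (2 : ℝ) • x by module, norm_sub_sq_real, norm_smul,
      norm_smul, real_inner_smul_left, real_inner_smul_right, real_inner_comm, hu,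
      Real.norm_of_nonneg hr, Real.norm_two]
    linarith
  have h := supportFun_ballHull_le hsub (insert_nonempty _ _) hu
  rwa [inner_sub_left, real_inner_smul_left, real_inner_self_eq_norm_sq, hu, one_pow, mul_one,
    sub_add_cancel] at h

lemma pair_subset_closedBall_of_inner_eq_zero {x z : EuclideanSpace ℝ (Fin d)} (hr : 0 ≤ r)
    (hxz : ⟪x, z⟫ = 0) (h : ‖x‖ ^ 2 + ‖z‖ ^ 2 = r ^ 2) : {x, -x} ⊆ closedBall z r := by
  rw [pair_subset_iff, mem_closedBall_iff_norm, mem_closedBall_iff_norm]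
  constructor <;> refine le_of_sq_le_sq ?_ hr <;>
    simp [norm_sub_sq_real, hxz, h]

end BallHull

section Plane

/-- The unit vector of the plane with polar angle `θ`. -/
noncomputable def unitDir (θ : ℝ) : EuclideanSpace ℝ (Fin 2) :=
  !₂[cos θ, sin θ]

@[simp] lemma unitDir_apply_zero (θ : ℝ) : unitDir θ 0 = cos θ := rfl

@[simp] lemma unitDir_apply_one (θ : ℝ) : unitDir θ 1 = sin θ := rfl

@[fun_prop]
lemma continuous_unitDir : Continuous unitDir := by
  unfold unitDir
  fun_prop

lemma inner_fin_two (v w : EuclideanSpace ℝ (Fin 2)) : ⟪v, w⟫ = v 0 * w 0 + v 1 * w 1 := by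
  simp [PiLp.inner_apply, Fin.sum_univ_two, mul_comm]

lemma inner_unitDir_unitDir (θ φ : ℝ) : ⟪unitDir θ, unitDir φ⟫ = cos (φ - θ) := by
  rw [inner_fin_two, cos_sub]
  simp only [unitDir_apply_zero, unitDir_apply_one]
  ring

@[simp] lemma norm_unitDir (θ : ℝ) : ‖unitDir θ‖ = 1 := by
  rw [norm_eq_sqrt_real_inner, inner_unitDir_unitDir, sub_self, cos_zero, sqrt_one]

lemma unitDir_add (θ φ : ℝ) :
    unitDir (θ + φ) = cos φ • unitDir θ + sin φ • unitDir (θ + π / 2) := by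
  ext i
  fin_cases i <;> simp [cos_add, sin_add, mul_comm, sub_eq_add_neg]

lemma inner_unitDir_add (v : EuclideanSpace ℝ (Fin 2)) (m ψ : ℝ) :
    ⟪v, unitDir (m + ψ)⟫ = ⟪v, unitDir m⟫ * cos ψ + ⟪v, unitDir (m + π / 2)⟫ * sin ψ := by
  rw [unitDir_add, inner_add_right, real_inner_smul_right, real_inner_smul_right, mul_comm,
    mul_comm (sin ψ)]

lemma unitDir_add_pi (θ : ℝ) : unitDir (θ + π) = -unitDir θ := by
  simp [unitDir_add θ π]

lemma periodic_unitDir : Function.Periodic unitDir (2 * π) := fun θ => by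
  simp [unitDir_add θ (2 * π)]

lemma norm_sq_eq_inner_unitDir (v : EuclideanSpace ℝ (Fin 2)) (μ : ℝ) :
    ‖v‖ ^ 2 = ⟪v, unitDir μ⟫ ^ 2 + ⟪v, unitDir (μ + π / 2)⟫ ^ 2 := by
  rw [EuclideanSpace.real_norm_sq_eq, Fin.sum_univ_two, inner_fin_two, inner_fin_two]
  simp only [unitDir_apply_zero, unitDir_apply_one, cos_add_pi_div_two, sin_add_pi_div_two]
  linear_combination (-(v 0 ^ 2 + v 1 ^ 2)) * cos_sq_add_sin_sq μ

lemma eq_inner_smul_unitDir (v : EuclideanSpace ℝ (Fin 2)) (μ : ℝ) :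
    v = ⟪v, unitDir μ⟫ • unitDir μ + ⟪v, unitDir (μ + π / 2)⟫ • unitDir (μ + π / 2) := by
  ext i
  fin_cases i <;>
    simp only [inner_fin_two, PiLp.add_apply, PiLp.smul_apply, smul_eq_mul, unitDir_apply_zero,
      unitDir_apply_one, cos_add_pi_div_two, sin_add_pi_div_two, Fin.zero_eta, Fin.mk_one]
  · linear_combination (-v 0) * cos_sq_add_sin_sq μ
  · linear_combination (-v 1) * cos_sq_add_sin_sq μ

lemma exists_eq_norm_smul_unitDir (v : EuclideanSpace ℝ (Fin 2)) (μ : ℝ) :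
    ∃ ψ, v = ‖v‖ • unitDir (μ + ψ) ∧ (0 ≤ ⟪v, unitDir μ⟫ → |ψ| ≤ π / 2) := by
  let w : ℂ := ⟨⟪v, unitDir μ⟫, ⟪v, unitDir (μ + π / 2)⟫⟩
  have hw : ‖w‖ = ‖v‖ := by
    rw [← sq_eq_sq₀ (norm_nonneg _) (norm_nonneg _), norm_sq_eq_inner_unitDir v μ,
      Complex.sq_norm, Complex.normSq_apply, sq, sq]
  refine ⟨w.arg, ?_, fun h => Complex.abs_arg_le_pi_div_two_iff.2 h⟩
  rw [unitDir_add, smul_add, smul_smul, smul_smul, ← hw, Complex.norm_mul_cos_arg,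
    Complex.norm_mul_sin_arg]
  exact eq_inner_smul_unitDir v μ

lemma volume_eq_lintegral_polar {A : Set (EuclideanSpace ℝ (Fin 2))} (hA : MeasurableSet A) :
    volume A =
      ∫⁻ θ in Ioo (-π) π, ∫⁻ t in {t : ℝ | 0 < t ∧ t • unitDir θ ∈ A}, ENNReal.ofReal t := by
  have hcoord : MeasurePreserving
      ((MeasurableEquiv.toLp 2 (Fin 2 → ℝ)).symm.trans (MeasurableEquiv.finTwoArrow (α := ℝ)))
      (volume : Measure (EuclideanSpace ℝ (Fin 2))) (volume : Measure (ℝ × ℝ)) :=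
    (volume_preserving_finTwoArrow ℝ).comp
      (EuclideanSpace.volume_preserving_symm_measurableEquiv_toLp (Fin 2))
  have hpolar : Measurable fun p : ℝ × ℝ => p.1 • unitDir p.2 :=
    Continuous.measurable (by fun_prop)
  calc volume A
      = ∫⁻ p in Ioi 0 ×ˢ Ioo (-π) π,
          ENNReal.ofReal p.1 * A.indicator 1 (p.1 • unitDir p.2) := by
        rw [← lintegral_indicator_one hA,
          ← hcoord.symm.lintegral_comp_emb (MeasurableEquiv.measurableEmbedding _),
          ← lintegral_comp_polarCoord_symm]
        refine setLIntegral_congr_fun polarCoord.open_target.measurableSet fun p _ => ?_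
        congr 2
        ext i
        fin_cases i <;> rfl
    _ = ∫⁻ θ in Ioo (-π) π, ∫⁻ t in Ioi 0,
          ENNReal.ofReal t * A.indicator 1 (t • unitDir θ) := by
        rw [Measure.volume_eq_prod, setLIntegral_prod_symm]
        exact (Measurable.mul (by fun_prop)
          ((measurable_one.indicator hA).comp hpolar)).aemeasurable
    _ = _ := by
        refine lintegral_congr fun θ => ?_
        have hray : MeasurableSet {t : ℝ | t • unitDir θ ∈ A} :=
          hA.preimage (f := fun t : ℝ => t • unitDir θ) (by fun_prop)
        have hset : {t : ℝ | 0 < t ∧ t • unitDir θ ∈ A} = {t | t • unitDir θ ∈ A} ∩ Ioi 0 := by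
          ext t
          exact and_comm
        rw [hset, ← Measure.restrict_restrict hray, ← lintegral_indicator hray]
        refine lintegral_congr fun t => ?_
        by_cases ht : t • unitDir θ ∈ A <;> simp [ht]

lemma setLIntegral_Ioc_ofReal {a : ℝ} (ha : 0 ≤ a) :
    ∫⁻ t in Ioc 0 a, ENNReal.ofReal t = ENNReal.ofReal (a ^ 2 / 2) := by
  rw [← ofReal_integral_eq_lintegral_ofReal, ← intervalIntegral.integral_of_le ha, integral_id]
  · simp
  · exact (continuous_id.intervalIntegrable _ _).1
  · filter_upwards [ae_restrict_mem measurableSet_Ioc] with t ht using ht.1.le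

lemma setLIntegral_Ioo_ofReal {f : ℝ → ℝ} (hf : Continuous f) (h0 : ∀ θ, 0 ≤ f θ) {a b : ℝ}
    (hab : a ≤ b) : ∫⁻ θ in Ioo a b, ENNReal.ofReal (f θ) = ENNReal.ofReal (∫ θ in a..b, f θ) := by
  rw [intervalIntegral.integral_of_le hab, integral_Ioc_eq_integral_Ioo,
    ofReal_integral_eq_lintegral_ofReal]
  · exact (hf.intervalIntegrable a b).1.mono_set Ioo_subset_Ioc_self
  · exact ae_of_all _ h0

lemma volume_le_of_radius_le {A : Set (EuclideanSpace ℝ (Fin 2))} (hA : MeasurableSet A)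
    {ρ : ℝ → ℝ} (hρ : Continuous ρ) (h0 : ∀ θ, 0 ≤ ρ θ)
    (h : ∀ θ t, 0 < t → t • unitDir θ ∈ A → t ≤ ρ θ) :
    (volume A).toReal ≤ ∫ θ in (-π)..π, ρ θ ^ 2 / 2 := by
  have hpi : -π ≤ π := by linarith [pi_pos]
  apply ENNReal.toReal_le_of_le_ofReal
  · exact intervalIntegral.integral_nonneg hpi fun θ _ => by positivity
  rw [volume_eq_lintegral_polar hA,
    ← setLIntegral_Ioo_ofReal (by fun_prop) (fun θ => by positivity) hpi]
  refine lintegral_mono fun θ => ?_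
  rw [← setLIntegral_Ioc_ofReal (h0 θ)]
  exact lintegral_mono_set fun t ht => ⟨ht.1, h θ t ht.1 ht.2⟩

lemma le_volume_of_le_radius {A : Set (EuclideanSpace ℝ (Fin 2))} (hA : MeasurableSet A)
    (hfin : volume A ≠ ⊤) {ρ : ℝ → ℝ} (hρ : Continuous ρ) (h0 : ∀ θ, 0 ≤ ρ θ)
    (h : ∀ θ t, 0 < t → t ≤ ρ θ → t • unitDir θ ∈ A) :
    ∫ θ in (-π)..π, ρ θ ^ 2 / 2 ≤ (volume A).toReal := by
  have hpi : -π ≤ π := by linarith [pi_pos]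
  rw [← ENNReal.ofReal_le_iff_le_toReal hfin, volume_eq_lintegral_polar hA,
    ← setLIntegral_Ioo_ofReal (by fun_prop) (fun θ => by positivity) hpi]
  refine lintegral_mono fun θ => ?_
  rw [← setLIntegral_Ioc_ofReal (h0 θ)]
  exact lintegral_mono_set fun t ht => ⟨ht.1, h θ t ht.1 ht.2⟩

lemma nonpos_of_mul_le_atTop {a b : ℝ} (h : ∀ᶠ x in atTop, a * x ≤ b) : a ≤ 0 := by
  by_contra! ha
  obtain ⟨x, hx, hxb⟩ := (h.and
    ((tendsto_id.const_mul_atTop ha).eventually_gt_atTop b)).exists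
  exact hxb.not_ge hx

section Cauchy

variable {K : Set (EuclideanSpace ℝ (Fin 2))}

@[fun_prop]
lemma continuous_supportFun_unitDir (hK : IsCompact K) :
    Continuous fun θ => supportFun K (unitDir θ) :=
  (continuous_supportFun hK).comp continuous_unitDir

lemma measurableSet_add_closedBall (hK : IsCompact K) (ε : ℝ) :
    MeasurableSet (K + closedBall 0 ε) :=
  (hK.add (isCompact_closedBall _ _)).measurableSet

lemma volume_add_closedBall_le (hK : IsCompact K) (hne : K.Nonempty) {R ε : ℝ}
    (hR : ∀ y ∈ K, ‖y‖ ≤ R) (hε : R ≤ ε) :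
    (volume (K + closedBall 0 ε)).toReal ≤
      π * ε ^ 2 + (∫ θ in (-π)..π, supportFun K (unitDir θ)) * ε +
        (∫ θ in (-π)..π, supportFun K (unitDir θ) ^ 2) / 2 := by
  have hpos (θ : ℝ) : 0 ≤ supportFun K (unitDir θ) + ε := by
    linarith [(abs_le.1 (abs_supportFun_le hK hne hR (norm_unitDir θ))).1]
  calc (volume (K + closedBall 0 ε)).toReal
      ≤ ∫ θ in (-π)..π, (supportFun K (unitDir θ) + ε) ^ 2 / 2 := by
        refine volume_le_of_radius_le (measurableSet_add_closedBall hK ε) (by fun_prop) hpos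
          fun θ t _ htK => ?_
        simpa [real_inner_smul_left] using
          inner_le_supportFun_add_of_mem_add hK htK (norm_unitDir θ)
    _ = ∫ θ in (-π)..π, (ε ^ 2 / 2 + supportFun K (unitDir θ) * ε +
          supportFun K (unitDir θ) ^ 2 / 2) := by
        congr 1 with θ
        ring
    _ = _ := by
        rw [intervalIntegral.integral_add, intervalIntegral.integral_add,
          intervalIntegral.integral_const, intervalIntegral.integral_mul_const,
          intervalIntegral.integral_div, smul_eq_mul]
        · ring
        all_goals exact Continuous.intervalIntegrable (by fun_prop) _ _

lemma le_volume_add_closedBall (hK : IsCompact K) (hne : K.Nonempty) {R ε : ℝ}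
    (hR : ∀ y ∈ K, ‖y‖ ≤ R) (hε : 0 < ε) (hRε : 2 * R ≤ ε) :
    π * ε ^ 2 + (∫ θ in (-π)..π, supportFun K (unitDir θ)) * ε - 2 * π * R ^ 2 ≤
      (volume (K + closedBall 0 ε)).toReal := by
  have hpi : -π ≤ π := by linarith [pi_pos]
  have hR0 : 0 ≤ R := (norm_nonneg _).trans (hR _ hne.some_mem)
  have hεR : ε * (R ^ 2 / ε) = R ^ 2 := mul_div_cancel₀ _ hε.ne'
  have hRεR : R ^ 2 / ε ≤ R / 2 := by
    rw [div_le_iff₀ hε]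
    nlinarith
  have hpos (θ : ℝ) : 0 ≤ ε + supportFun K (unitDir θ) - R ^ 2 / ε := by
    linarith [(abs_le.1 (abs_supportFun_le hK hne hR (norm_unitDir θ))).1]
  calc π * ε ^ 2 + (∫ θ in (-π)..π, supportFun K (unitDir θ)) * ε - 2 * π * R ^ 2
      = ∫ θ in (-π)..π, (ε ^ 2 / 2 - R ^ 2 + supportFun K (unitDir θ) * ε) := by
        rw [intervalIntegral.integral_add, intervalIntegral.integral_const,
          intervalIntegral.integral_mul_const, smul_eq_mul]
        · ring
        all_goals exact Continuous.intervalIntegrable (by fun_prop) _ _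
    _ ≤ ∫ θ in (-π)..π, (ε + supportFun K (unitDir θ) - R ^ 2 / ε) ^ 2 / 2 := by
        refine intervalIntegral.integral_mono_on hpi
          (Continuous.intervalIntegrable (by fun_prop) _ _)
          (Continuous.intervalIntegrable (by fun_prop) _ _) fun θ _ => ?_
        linarith [sq_nonneg (supportFun K (unitDir θ) - R ^ 2 / ε)]
    _ ≤ (volume (K + closedBall 0 ε)).toReal :=
        le_volume_of_le_radius (measurableSet_add_closedBall hK ε)
          (hK.add (isCompact_closedBall _ _)).measure_lt_top.ne (by fun_prop) hpos
          fun θ t ht htε =>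
            smul_mem_add_closedBall hK hne hR hε hRε (norm_unitDir θ) ht.le htε

lemma unitBallVol_one : unitBallVol 1 = 2 := by
  have hΓ : Gamma (2⁻¹ + 1) = √π / 2 := by
    rw [Gamma_add_one (by norm_num), ← one_div, Gamma_one_half_eq]
    ring
  have hpi : √π ≠ 0 := by positivity
  simp [unitBallVol, EuclideanSpace.volume_closedBall, hΓ, div_div_cancel₀ hpi]

lemma unitBallVol_two : unitBallVol 2 = π := by
  simp [unitBallVol, pi_pos.le]

lemma two_mul_intrinsicVolume_one_eq_integral {V : ℕ → Set (EuclideanSpace ℝ (Fin 2)) → ℝ}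
    (hV : IsIntrinsicVolumes 2 V) (hconv : Convex ℝ K) (hK : IsCompact K) (hne : K.Nonempty) :
    2 * V 1 K = ∫ θ in (-π)..π, supportFun K (unitDir θ) := by
  obtain ⟨R, hR⟩ := isBounded_iff_forall_norm_le.1 hK.isBounded
  have steiner {ε : ℝ} (hε : 0 < ε) : (volume (K + closedBall 0 ε)).toReal =
      π * ε ^ 2 + 2 * V 1 K * ε + unitBallVol 0 * V 2 K := by
    rw [← smul_unitClosedBall_of_nonneg hε.le, (hV K hconv hK hne).1 ε hε]
    simp [Finset.sum_range_succ, (hV K hconv hK hne).2, unitBallVol_one, unitBallVol_two]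
  have hlarge := (eventually_gt_atTop (0 : ℝ)).and
    ((eventually_ge_atTop R).and (eventually_ge_atTop (2 * R)))
  set I := ∫ θ in (-π)..π, supportFun K (unitDir θ)
  set J := ∫ θ in (-π)..π, supportFun K (unitDir θ) ^ 2
  have hle : 2 * V 1 K - I ≤ 0 := by
    refine nonpos_of_mul_le_atTop (b := J / 2 - unitBallVol 0 * V 2 K) ?_
    filter_upwards [hlarge] with ε ⟨hε, hRε, _⟩
    have := steiner hε ▸ volume_add_closedBall_le hK hne hR hRε
    linarith
  have hge : I - 2 * V 1 K ≤ 0 := by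
    refine nonpos_of_mul_le_atTop (b := 2 * π * R ^ 2 + unitBallVol 0 * V 2 K) ?_
    filter_upwards [hlarge] with ε ⟨hε, _, h2Rε⟩
    have := steiner hε ▸ le_volume_add_closedBall hK hne hR hε h2Rε
    linarith
  linarith

lemma two_mul_intrinsicVolume_one_eq_integral_sub {V : ℕ → Set (EuclideanSpace ℝ (Fin 2)) → ℝ}
    (hV : IsIntrinsicVolumes 2 V) (hconv : Convex ℝ K) (hK : IsCompact K) (hne : K.Nonempty)
    (c : EuclideanSpace ℝ (Fin 2)) (τ : ℝ) :
    2 * V 1 K = ∫ θ in τ..(τ + 2 * π), (supportFun K (unitDir θ) - ⟪c, unitDir θ⟫) := by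
  have hc := continuous_supportFun_unitDir hK
  have hper : Function.Periodic (fun θ => supportFun K (unitDir θ) - ⟪c, unitDir θ⟫) (2 * π) :=
    fun θ => by simp only [periodic_unitDir θ]
  have hcenter : ∫ θ in (-π)..π, ⟪c, unitDir θ⟫ = 0 := by
    simp only [inner_fin_two, unitDir_apply_zero, unitDir_apply_one]
    rw [intervalIntegral.integral_add (Continuous.intervalIntegrable (by fun_prop) _ _)
      (Continuous.intervalIntegrable (by fun_prop) _ _)]
    simp
  rw [two_mul_intrinsicVolume_one_eq_integral hV hconv hK hne,
    hper.intervalIntegral_add_eq τ (-π), show -π + 2 * π = π by ring,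
    intervalIntegral.integral_sub (hc.intervalIntegrable _ _)
      (Continuous.intervalIntegrable (by fun_prop) _ _), hcenter, sub_zero]

end Cauchy

section ArcHalfAngle

/-- A chord of a circle of radius `k * r` subtending the angle `2 * α` at its centre subtends the
angle `2 * arcHalfAngle k α` at the centre of a circle of radius `r`. -/
noncomputable def arcHalfAngle (k α : ℝ) : ℝ :=
  arcsin (k * sin α)

variable {k α : ℝ}

lemma arcHalfAngle_zero_right : arcHalfAngle k 0 = 0 := by
  simp [arcHalfAngle]

lemma arcHalfAngle_pi_div_two : arcHalfAngle k (π / 2) = arcsin k := by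
  simp [arcHalfAngle]

lemma arcHalfAngle_nonneg (hk : 0 ≤ k) (hα : α ∈ Icc 0 (π / 2)) : 0 ≤ arcHalfAngle k α :=
  arcsin_nonneg.2 <| mul_nonneg hk <|
    sin_nonneg_of_nonneg_of_le_pi hα.1 (hα.2.trans (half_le_self pi_pos.le))

lemma arcHalfAngle_le_pi_div_two : arcHalfAngle k α ≤ π / 2 :=
  arcsin_le_pi_div_two _

lemma arcHalfAngle_le_self (hk : k ≤ 1) (hα : α ∈ Icc 0 (π / 2)) : arcHalfAngle k α ≤ α := by
  have hsin : 0 ≤ sin α := sin_nonneg_of_nonneg_of_le_pi hα.1 (by linarith [hα.2, pi_pos])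
  calc arcsin (k * sin α) ≤ arcsin (sin α) := monotone_arcsin (mul_le_of_le_one_left hsin hk)
    _ = α := arcsin_sin (by linarith [hα.1, pi_pos]) hα.2

lemma sin_arcHalfAngle (hk : k ∈ Icc 0 1) : sin (arcHalfAngle k α) = k * sin α := by
  have h : |k * sin α| ≤ 1 := by
    rw [abs_mul, abs_of_nonneg hk.1]
    exact mul_le_one₀ hk.2 (abs_nonneg _) (abs_sin_le_one α)
  exact sin_arcsin (neg_le_of_abs_le h) (le_of_abs_le h)

lemma hasDerivAt_arcHalfAngle (hk : k ∈ Icc 0 1) (hα : α ∈ Ioo 0 (π / 2)) :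
    HasDerivAt (arcHalfAngle k) (k * cos α / √(1 - k ^ 2 + (k * cos α) ^ 2)) α := by
  have hsin : 0 ≤ sin α := sin_nonneg_of_nonneg_of_le_pi hα.1.le (by linarith [hα.2, pi_pos])
  have hsin1 : sin α < 1 := by
    rw [← sin_pi_div_two]
    exact sin_lt_sin_of_lt_of_le_pi_div_two (by linarith [hα.1, pi_pos]) le_rfl hα.2
  have h1 : k * sin α < 1 := (mul_le_of_le_one_left hsin hk.2).trans_lt hsin1
  have h0 : -1 < k * sin α := by linarith [mul_nonneg hk.1 hsin]
  have hrad : 1 - (k * sin α) ^ 2 = 1 - k ^ 2 + (k * cos α) ^ 2 := by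
    linear_combination (-k ^ 2) * sin_sq_add_cos_sq α
  refine ((hasDerivAt_arcsin h0.ne' h1.ne).comp α
    ((hasDerivAt_sin α).const_mul k)).congr_deriv ?_
  rw [hrad, one_div_mul_eq_div]

lemma div_sqrt_add_sq_mono {c p q : ℝ} (hc : 0 ≤ c) (hp : 0 ≤ p) (hpq : p ≤ q) :
    p / √(c + p ^ 2) ≤ q / √(c + q ^ 2) := by
  obtain rfl | hp := hp.eq_or_lt
  · rw [zero_div]
    positivity
  have hq : 0 < q := hp.trans_le hpq
  rw [div_le_div_iff₀ (by positivity) (by positivity), ← sqrt_sq hp.le, ← sqrt_sq hq.le,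
    sq_sqrt (sq_nonneg p), sq_sqrt (sq_nonneg q), ← sqrt_mul (sq_nonneg p),
    ← sqrt_mul (sq_nonneg q)]
  refine sqrt_le_sqrt ?_
  have : p ^ 2 * c ≤ q ^ 2 * c := by gcongr
  linarith

lemma antitoneOn_deriv_arcHalfAngle (hk : k ∈ Icc 0 1) :
    AntitoneOn (deriv (arcHalfAngle k)) (Ioo 0 (π / 2)) := by
  intro α hα β hβ hαβ
  have hcosβ : 0 ≤ cos β := cos_nonneg_of_mem_Icc ⟨by linarith [hβ.1, pi_pos], hβ.2.le⟩
  have hcos : cos β ≤ cos α :=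
    cos_le_cos_of_nonneg_of_le_pi hα.1.le (by linarith [hβ.2, pi_pos]) hαβ
  rw [(hasDerivAt_arcHalfAngle hk hα).deriv, (hasDerivAt_arcHalfAngle hk hβ).deriv]
  exact div_sqrt_add_sq_mono (sub_nonneg.2 (pow_le_one₀ hk.1 hk.2)) (mul_nonneg hk.1 hcosβ)
    (mul_le_mul_of_nonneg_left hcos hk.1)

lemma concaveOn_arcHalfAngle (hk : k ∈ Icc 0 1) :
    ConcaveOn ℝ (Icc 0 (π / 2)) (arcHalfAngle k) := by
  refine AntitoneOn.concaveOn_of_deriv (convex_Icc _ _) ?_ ?_ ?_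
  · exact (continuous_arcsin.comp (continuous_sin.const_mul k)).continuousOn
  · rw [interior_Icc]
    exact fun α hα => (hasDerivAt_arcHalfAngle hk hα).differentiableAt.differentiableWithinAt
  · rw [interior_Icc]
    exact antitoneOn_deriv_arcHalfAngle hk

lemma mul_arcsin_le_arcHalfAngle (hk : k ∈ Icc 0 1) (hα : α ∈ Icc 0 (π / 2)) :
    2 * α / π * arcsin k ≤ arcHalfAngle k α := by
  have hpi := pi_pos
  have ht0 : 0 ≤ 2 * α / π := div_nonneg (by linarith [hα.1]) hpi.le
  have ht1 : 0 ≤ 1 - 2 * α / π := by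
    rw [sub_nonneg, div_le_one hpi]
    linarith [hα.2]
  have h := (concaveOn_arcHalfAngle hk).2 (left_mem_Icc.2 (by positivity))
    (right_mem_Icc.2 (by positivity)) ht1 ht0 (sub_add_cancel _ _)
  simp only [arcHalfAngle_zero_right, arcHalfAngle_pi_div_two, smul_eq_mul, mul_zero,
    zero_add] at h
  rwa [show 2 * α / π * (π / 2) = α by field_simp] at h

end ArcHalfAngle

section Sector

-- Condition `h` makes the arc of radius `r` and half-angle `a` around the direction `m` span the
-- chord between the points of polar coordinates `(r₀, m ± α)`; its centre is the multiple
-- `r₀ * cos α - r * cos a` of `unitDir m`. The integrands are the support function of that arc.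
lemma integral_sector_eq {r r₀ α a : ℝ} (h : r * sin a = r₀ * sin α) (m : ℝ) :
    (∫ θ in (m - α)..(m - a), r₀ * cos (θ - (m - α))) +
        (∫ θ in (m - a)..(m + a), (r + (r₀ * cos α - r * cos a) * cos (θ - m))) +
        ∫ θ in (m + a)..(m + α), r₀ * cos (θ - (m + α)) = 2 * r * a := by
  have hint (f : ℝ → ℝ) (hf : Continuous f) (x y : ℝ) : IntervalIntegrable f volume x y :=
    hf.intervalIntegrable x y
  rw [intervalIntegral.integral_add (hint _ (by fun_prop) _ _) (hint _ (by fun_prop) _ _)]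
  simp only [intervalIntegral.integral_const_mul, intervalIntegral.integral_const,
    intervalIntegral.integral_comp_sub_right (fun θ => cos θ), integral_cos, smul_eq_mul]
  rw [show m - a - (m - α) = α - a by ring, show m + a - (m + α) = -(α - a) by ring,
    sub_sub_cancel_left, add_sub_cancel_left, sub_self, sub_self, sin_neg, sin_neg, sin_sub,
    sin_zero]
  linear_combination (-2 * cos a) * h

lemma two_mul_mul_le_integral_sector {h : ℝ → ℝ} (hc : Continuous h) {r r₀ m α a : ℝ}
    (ha0 : 0 ≤ a) (haα : a ≤ α) (hra : r * sin a = r₀ * sin α)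
    (hleft : ∀ θ ∈ Icc (m - α) (m - a), r₀ * cos (θ - (m - α)) ≤ h θ)
    (hmid : ∀ θ ∈ Icc (m - a) (m + a), r + (r₀ * cos α - r * cos a) * cos (θ - m) ≤ h θ)
    (hright : ∀ θ ∈ Icc (m + a) (m + α), r₀ * cos (θ - (m + α)) ≤ h θ) :
    2 * r * a ≤ ∫ θ in (m - α)..(m + α), h θ := by
  have hint (f : ℝ → ℝ) (hf : Continuous f) (x y : ℝ) : IntervalIntegrable f volume x y :=
    hf.intervalIntegrable x y
  rw [← integral_sector_eq hra m,
    ← intervalIntegral.integral_add_adjacent_intervals (hint h hc _ (m + a)) (hint h hc _ _),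
    ← intervalIntegral.integral_add_adjacent_intervals (hint h hc _ (m - a)) (hint h hc _ _)]
  refine add_le_add (add_le_add ?_ ?_) ?_ <;>
    refine intervalIntegral.integral_mono_on (by linarith) (hint _ (by fun_prop) _ _)
      (hint h hc _ _) ?_
  exacts [hleft, hmid, hright]

lemma integral_sector_le_two_mul_mul {h : ℝ → ℝ} (hc : Continuous h) {r r₀ m α a : ℝ}
    (ha0 : 0 ≤ a) (haα : a ≤ α) (hra : r * sin a = r₀ * sin α)
    (hleft : ∀ θ ∈ Icc (m - α) (m - a), h θ ≤ r₀ * cos (θ - (m - α)))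
    (hmid : ∀ θ ∈ Icc (m - a) (m + a), h θ ≤ r + (r₀ * cos α - r * cos a) * cos (θ - m))
    (hright : ∀ θ ∈ Icc (m + a) (m + α), h θ ≤ r₀ * cos (θ - (m + α))) :
    ∫ θ in (m - α)..(m + α), h θ ≤ 2 * r * a := by
  have := two_mul_mul_le_integral_sector hc.neg (r := -r) (r₀ := -r₀) ha0 haα (by linarith)
    (fun θ hθ => by linarith [hleft θ hθ, Pi.neg_apply h θ])
    (fun θ hθ => by linarith [hmid θ hθ, Pi.neg_apply h θ])
    (fun θ hθ => by linarith [hright θ hθ, Pi.neg_apply h θ])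
  simp only [Pi.neg_apply, intervalIntegral.integral_neg] at this
  linarith

end Sector

section Arc

variable {r : ℝ} {X : Set (EuclideanSpace ℝ (Fin 2))} {c z : EuclideanSpace ℝ (Fin 2)}

lemma add_smul_unitDir_mem_closedBall_iff (hr : 0 ≤ r) {φ : ℝ} :
    c + r • unitDir φ ∈ closedBall z r ↔ ‖z - c‖ ^ 2 ≤ 2 * r * ⟪z - c, unitDir φ⟫ := by
  rw [mem_closedBall_iff_norm, ← sq_le_sq₀ (norm_nonneg _) hr,
    show c + r • unitDir φ - z = r • unitDir φ - (z - c) by abel, norm_sub_sq_real, norm_smul,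
    norm_unitDir, mul_one, Real.norm_eq_abs, sq_abs, real_inner_smul_left, real_inner_comm]
  constructor <;> intro h <;> linarith

lemma mul_cos_sub_abs_mul_sin_le {s t a ψ : ℝ} (hs : 0 ≤ s) (hψ : |ψ| ≤ a) (ha : a ≤ π / 2) :
    s * cos a - |t| * sin a ≤ s * cos ψ + t * sin ψ := by
  have hpi := pi_pos
  have hcos : s * cos a ≤ s * cos ψ := by
    rw [← cos_abs ψ]
    exact mul_le_mul_of_nonneg_left
      (cos_le_cos_of_nonneg_of_le_pi (abs_nonneg ψ) (by linarith) hψ) hs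
  have hsin : -(|t| * sin a) ≤ t * sin ψ := by
    refine neg_le_of_abs_le ?_
    rw [abs_mul, abs_sin_eq_sin_abs_of_abs_le_pi (by linarith)]
    exact mul_le_mul_of_nonneg_left
      (sin_le_sin_of_le_of_le_pi_div_two (by linarith [abs_nonneg ψ]) ha hψ) (abs_nonneg t)
  linarith

lemma add_smul_unitDir_mem_ballHull (hr : 0 ≤ r) {m a ψ : ℝ} (ha : a ≤ π / 2) (hψ : |ψ| ≤ a)
    (hsub : c + r • unitDir (m - a) ∈ X) (hadd : c + r • unitDir (m + a) ∈ X) :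
    c + r • unitDir (m + ψ) ∈ ballHull r X := by
  refine mem_ballHull.2 fun z hz => ?_
  have h₁ := (add_smul_unitDir_mem_closedBall_iff hr).1 (hz hsub)
  have h₂ := (add_smul_unitDir_mem_closedBall_iff hr).1 (hz hadd)
  rw [add_smul_unitDir_mem_closedBall_iff hr, inner_unitDir_add]
  rw [sub_eq_add_neg m, inner_unitDir_add, cos_neg, sin_neg] at h₁
  rw [inner_unitDir_add] at h₂
  have ha0 : 0 ≤ a := (abs_nonneg ψ).trans hψ
  have hcosa : 0 ≤ cos a := cos_nonneg_of_mem_Icc ⟨by linarith [pi_pos], ha⟩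
  set s := ⟪z - c, unitDir m⟫
  set t := ⟪z - c, unitDir (m + π / 2)⟫
  have hs : 0 ≤ s := by
    by_contra! hs
    have hle : ‖z - c‖ ^ 2 ≤ 0 := by
      linarith [mul_nonneg (mul_nonneg hr hcosa) (neg_nonneg.2 hs.le)]
    have hzero : z - c = 0 := by simpa using hle.antisymm (sq_nonneg _)
    simp [s, hzero] at hs
  have habs : ‖z - c‖ ^ 2 ≤ 2 * r * (s * cos a - |t| * sin a) := by
    rcases abs_choice t with ht | ht <;> rw [ht] <;> linarith
  exact habs.trans (mul_le_mul_of_nonneg_left (mul_cos_sub_abs_mul_sin_le hs hψ ha) (by positivity))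

lemma smul_unitDir_add_eq {r₀ a α : ℝ} (h : r * sin a = r₀ * sin α) (m : ℝ) :
    r₀ • unitDir (m + α) = (r₀ * cos α - r * cos a) • unitDir m + r • unitDir (m + a) := by
  rw [unitDir_add m α, unitDir_add m a, smul_add, smul_add, smul_smul, smul_smul, smul_smul,
    smul_smul, ← h]
  module

lemma arc_mem_ballHull_of_chord_mem (hr : 0 ≤ r) {r₀ m a α θ : ℝ} (ha : a ≤ π / 2)
    (hra : r * sin a = r₀ * sin α) (hθ : |θ - m| ≤ a) (hsub : c + r₀ • unitDir (m - α) ∈ X)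
    (hadd : c + r₀ • unitDir (m + α) ∈ X) :
    c + ((r₀ * cos α - r * cos a) • unitDir m + r • unitDir θ) ∈ ballHull r X := by
  have hra' : r * sin (-a) = r₀ * sin (-α) := by rw [sin_neg, sin_neg, mul_neg, mul_neg, hra]
  rw [smul_unitDir_add_eq hra, ← add_assoc] at hadd
  rw [sub_eq_add_neg, smul_unitDir_add_eq hra', cos_neg, cos_neg, ← sub_eq_add_neg m,
    ← add_assoc] at hsub
  rw [← add_assoc, ← add_sub_cancel m θ]
  exact add_smul_unitDir_mem_ballHull hr ha hθ hsub hadd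

lemma two_mul_arcHalfAngle_le_integral_supportFun (hX : X ⊆ closedBall z r) (hr : 0 ≤ r)
    {k m α : ℝ} (hk : k ∈ Icc 0 1) (hα : α ∈ Icc 0 (π / 2))
    (hsub : c + (r * k) • unitDir (m - α) ∈ X) (hadd : c + (r * k) • unitDir (m + α) ∈ X) :
    2 * r * arcHalfAngle k α ≤
      ∫ θ in (m - α)..(m + α), (supportFun (ballHull r X) (unitDir θ) - ⟪c, unitDir θ⟫) := by
  have hK := isCompact_ballHull hX
  have hvertex {τ : ℝ} (hτ : c + (r * k) • unitDir τ ∈ X) (θ : ℝ) :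
      r * k * cos (θ - τ) ≤ supportFun (ballHull r X) (unitDir θ) - ⟪c, unitDir θ⟫ := by
    rw [← inner_unitDir_unitDir, ← real_inner_smul_left]
    exact inner_le_supportFun_sub_of_add_mem hK (subset_ballHull hτ) _
  have hsin : r * sin (arcHalfAngle k α) = r * k * sin α := by
    rw [sin_arcHalfAngle hk, mul_assoc]
  refine two_mul_mul_le_integral_sector (by fun_prop) (arcHalfAngle_nonneg hk.1 hα)
    (arcHalfAngle_le_self hk.2 hα) hsin (fun θ _ => hvertex hsub θ) (fun θ hθ => ?_)
    (fun θ _ => hvertex hadd θ)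
  have hθm : |θ - m| ≤ arcHalfAngle k α :=
    abs_sub_le_iff.2 ⟨by linarith [hθ.2], by linarith [hθ.1]⟩
  have harc := inner_le_supportFun_sub_of_add_mem hK (arc_mem_ballHull_of_chord_mem hr
    arcHalfAngle_le_pi_div_two hsin hθm hsub hadd) (unitDir θ)
  rw [inner_add_left, real_inner_smul_left, real_inner_smul_left, inner_unitDir_unitDir,
    real_inner_self_eq_norm_sq, norm_unitDir] at harc
  linarith

lemma mul_arcsin_le_integral_supportFun (hX : X ⊆ closedBall z r) (hr : 0 ≤ r) {k : ℝ}
    (hk : k ∈ Icc 0 1) {σ τ : ℝ} (hστ : σ ≤ τ) (hτσ : τ ≤ σ + π)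
    (hσ : c + (r * k) • unitDir σ ∈ X) (hτ : c + (r * k) • unitDir τ ∈ X) :
    (τ - σ) / π * (2 * r * arcsin k) ≤
      ∫ θ in σ..τ, (supportFun (ballHull r X) (unitDir θ) - ⟪c, unitDir θ⟫) := by
  obtain ⟨m, α, rfl, rfl⟩ : ∃ m α, m - α = σ ∧ m + α = τ :=
    ⟨(σ + τ) / 2, (τ - σ) / 2, by ring, by ring⟩
  have hα : α ∈ Icc 0 (π / 2) := ⟨by linarith, by linarith⟩
  calc (m + α - (m - α)) / π * (2 * r * arcsin k)
      = 2 * r * (2 * α / π * arcsin k) := by ring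
    _ ≤ 2 * r * arcHalfAngle k α :=
      mul_le_mul_of_nonneg_left (mul_arcsin_le_arcHalfAngle hk hα) (by positivity)
    _ ≤ _ := two_mul_arcHalfAngle_le_integral_supportFun hX hr hk hα hσ hτ

end Arc

lemma exists_mem_Icc_mem_Icc_le_add {T : Set ℝ} (hT : IsClosed T) {L : ℝ}
    (hmeet : ∀ s, (T ∩ Icc s (s + L)).Nonempty) (x : ℝ) :
    ∃ y ∈ T ∩ Icc x (x + L), ∃ z ∈ T ∩ Icc (x + L) (x + L + L), z ≤ y + L := by
  obtain ⟨y, hy, hmax⟩ := (isCompact_Icc.inter_left hT).exists_isGreatest (hmeet x)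
  obtain ⟨z, hz, hmin⟩ := (isCompact_Icc.inter_left hT).exists_isLeast (hmeet (x + L))
  refine ⟨y, hy, z, hz, ?_⟩
  by_contra! hgap
  obtain ⟨t, htT, hst, hts⟩ := hmeet ((y + z - L) / 2)
  have hyt : y < t := by linarith
  have htz : t < z := by linarith
  rcases le_total t (x + L) with ht | ht
  · exact hyt.not_ge (hmax ⟨htT, hy.2.1.trans hyt.le, ht⟩)
  · exact htz.not_ge (hmin ⟨htT, ht, htz.le.trans hz.2.2⟩)

lemma exists_add_smul_unitDir_mem {X : Set (EuclideanSpace ℝ (Fin 2))} (hX : IsCompact X) {ρ : ℝ}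
    (hρ : ∀ z s, X ⊆ closedBall z s → ρ ≤ s) {c : EuclideanSpace ℝ (Fin 2)}
    (hc : X ⊆ closedBall c ρ) (s : ℝ) :
    ∃ θ, c + ρ • unitDir θ ∈ X ∧ θ ∈ Icc s (s + π) := by
  obtain ⟨p, hp, hpc, hinner⟩ := exists_mem_dist_eq_inner_nonneg hX hρ hc (unitDir (s + π / 2))
  obtain ⟨ψ, hψ, hψ_le⟩ := exists_eq_norm_smul_unitDir (p - c) (s + π / 2)
  have hψ_mem := abs_le.1 (hψ_le hinner)
  rw [← dist_eq_norm, hpc] at hψ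
  refine ⟨s + π / 2 + ψ, ?_, by linarith, by linarith⟩
  rwa [← hψ, add_sub_cancel]

section Bounds

variable {V : ℕ → Set (EuclideanSpace ℝ (Fin 2)) → ℝ} {r k : ℝ}

lemma two_mul_arcsin_le_intrinsicVolume_ballHull (hV : IsIntrinsicVolumes 2 V) (hr : 0 ≤ r)
    (hk : k ∈ Icc 0 1) {X : Set (EuclideanSpace ℝ (Fin 2))} (hX : IsCompact X)
    (hcr : IsLeast {ρ : ℝ | ∃ c, X ⊆ closedBall c ρ} (r * k)) :
    2 * r * arcsin k ≤ V 1 (ballHull r X) := by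
  obtain ⟨⟨c, hc⟩, hmin⟩ := hcr
  have hXr : X ⊆ closedBall c r :=
    hc.trans (closedBall_subset_closedBall (mul_le_of_le_one_right hr hk.2))
  let T := (fun θ => c + (r * k) • unitDir θ) ⁻¹' X
  have hT : IsClosed T := hX.isClosed.preimage (by fun_prop)
  have hmeet (s : ℝ) : (T ∩ Icc s (s + π)).Nonempty :=
    exists_add_smul_unitDir_mem hX (fun z s hz => hmin ⟨z, hz⟩) hc s
  obtain ⟨τ₁, hτ₁, -⟩ := hmeet 0
  obtain ⟨τ₂, hτ₂, τ₃, hτ₃, hgap⟩ := exists_mem_Icc_mem_Icc_le_add hT hmeet τ₁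
  have hτ₄ : τ₁ + 2 * π ∈ T := by rwa [mem_preimage, periodic_unitDir τ₁]
  have hint (x y : ℝ) : IntervalIntegrable
      (fun θ => supportFun (ballHull r X) (unitDir θ) - ⟪c, unitDir θ⟫) volume x y := by
    have := isCompact_ballHull hXr
    exact Continuous.intervalIntegrable (by fun_prop) x y
  have h₁ := mul_arcsin_le_integral_supportFun hXr hr hk hτ₂.2.1 hτ₂.2.2 hτ₁ hτ₂.1
  have h₂ := mul_arcsin_le_integral_supportFun hXr hr hk (hτ₂.2.2.trans hτ₃.2.1) hgap hτ₂.1 hτ₃.1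
  have h₃ := mul_arcsin_le_integral_supportFun hXr hr hk (by linarith [hτ₃.2.2])
    (by linarith [hτ₃.2.1]) hτ₃.1 hτ₄
  have hne : X.Nonempty := ⟨_, hτ₁⟩
  have hcauchy := two_mul_intrinsicVolume_one_eq_integral_sub hV convex_ballHull
    (isCompact_ballHull hXr) (hne.mono subset_ballHull) c τ₁
  rw [← intervalIntegral.integral_add_adjacent_intervals (hint _ τ₂) (hint _ _),
    ← intervalIntegral.integral_add_adjacent_intervals (hint τ₂ τ₃) (hint _ _)] at hcauchy
  have hsum : (τ₂ - τ₁) / π * (2 * r * arcsin k) + (τ₃ - τ₂) / π * (2 * r * arcsin k) +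
      (τ₁ + 2 * π - τ₃) / π * (2 * r * arcsin k) = 2 * (2 * r * arcsin k) := by
    field_simp
    ring
  linarith

lemma supportFun_spindle_le_of_abs_sub_le (hr : 0 ≤ r) (hk : k ∈ Icc 0 1) {θ τ : ℝ}
    (h : |θ - τ| ≤ π / 2 - arcsin k) :
    supportFun (ballHull r {(r * k) • unitDir τ, -((r * k) • unitDir τ)}) (unitDir θ) ≤
      r * k * cos (θ - τ) := by
  have hcos : k ≤ cos (θ - τ) := by
    rw [← sin_arcsin (neg_one_lt_zero.le.trans hk.1) hk.2, ← cos_pi_div_two_sub, ← cos_abs (θ - τ)]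
    exact cos_le_cos_of_nonneg_of_le_pi (abs_nonneg _)
      (by linarith [arcsin_nonneg.2 hk.1, pi_pos]) h
  rw [← inner_unitDir_unitDir, ← real_inner_smul_left]
  refine supportFun_ballHull_pair_le_inner hr (norm_unitDir θ) ?_
  rw [norm_smul, norm_unitDir, mul_one, Real.norm_eq_abs, sq_abs, real_inner_smul_left,
    inner_unitDir_unitDir]
  calc (r * k) ^ 2 = r * (r * k * k) := by ring
    _ ≤ r * (r * k * cos (θ - τ)) := by
      have := hk.1
      gcongr

lemma supportFun_spindle_le (hr : 0 ≤ r) (hk : k ∈ Icc 0 1) (θ τ : ℝ) :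
    supportFun (ballHull r {(r * k) • unitDir τ, -((r * k) • unitDir τ)}) (unitDir θ) ≤
      r - r * cos (arcsin k) * cos (θ - (τ + π / 2)) := by
  have hsq : (r * k) ^ 2 + (r * cos (arcsin k)) ^ 2 = r ^ 2 := by
    have := sin_sq_add_cos_sq (arcsin k)
    rw [sin_arcsin (neg_one_lt_zero.le.trans hk.1) hk.2] at this
    linear_combination r ^ 2 * this
  have hball := pair_subset_closedBall_of_inner_eq_zero (x := (r * k) • unitDir τ)
    (z := -(r * cos (arcsin k)) • unitDir (τ + π / 2)) hr
    (by simp [real_inner_smul_left, real_inner_smul_right, inner_unitDir_unitDir])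
    (by simpa [norm_smul, mul_pow] using hsq)
  have := supportFun_ballHull_le hball (insert_nonempty _ _) (norm_unitDir θ)
  rw [real_inner_smul_left, inner_unitDir_unitDir] at this
  linarith

lemma integral_supportFun_spindle_le (hr : 0 ≤ r) (hk : k ∈ Icc 0 1) (τ : ℝ) :
    ∫ θ in τ..(τ + π),
      supportFun (ballHull r {(r * k) • unitDir τ, -((r * k) • unitDir τ)}) (unitDir θ) ≤
        2 * r * arcsin k := by
  have hx : ‖(r * k) • unitDir τ‖ ≤ r := by
    rw [norm_smul, norm_unitDir, mul_one, Real.norm_of_nonneg (mul_nonneg hr hk.1)]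
    exact mul_le_of_le_one_right hr hk.2
  have hK := isCompact_ballHull_pair hx
  have hτπ : τ + π / 2 + π / 2 = τ + π := by ring
  have h := integral_sector_le_two_mul_mul (continuous_supportFun_unitDir hK) (r := r)
    (r₀ := r * k) (m := τ + π / 2) (arcsin_nonneg.2 hk.1) (arcsin_le_pi_div_two k)
    (by rw [sin_arcsin (neg_one_lt_zero.le.trans hk.1) hk.2, sin_pi_div_two, mul_one])
    (fun θ hθ => ?_) (fun θ _ => ?_) (fun θ hθ => ?_)
  · rwa [add_sub_cancel_right, hτπ] at h
  · rw [add_sub_cancel_right] at hθ ⊢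
    exact supportFun_spindle_le_of_abs_sub_le hr hk
      (abs_sub_le_iff.2 ⟨by linarith [hθ.2], by linarith [hθ.1, arcsin_le_pi_div_two k]⟩)
  · have := supportFun_spindle_le hr hk θ τ
    rw [cos_pi_div_two]
    linarith
  · rw [hτπ] at hθ ⊢
    have := supportFun_spindle_le_of_abs_sub_le hr hk (θ := θ) (τ := τ + π)
      (abs_sub_le_iff.2 ⟨by linarith [hθ.2, arcsin_le_pi_div_two k], by linarith [hθ.1]⟩)
    rwa [unitDir_add_pi, smul_neg, neg_neg, pair_comm] at this

lemma intrinsicVolume_spindle_le (hV : IsIntrinsicVolumes 2 V) (hr : 0 ≤ r) (hk : k ∈ Icc 0 1)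
    {x : EuclideanSpace ℝ (Fin 2)} (hx : ‖x‖ = r * k) :
    V 1 (ballHull r {x, -x}) ≤ 2 * r * arcsin k := by
  obtain ⟨τ, hτ, -⟩ := exists_eq_norm_smul_unitDir x 0
  rw [hx, zero_add] at hτ
  have hK := isCompact_ballHull_pair (hx.le.trans (mul_le_of_le_one_right hr hk.2))
  have hint (a b : ℝ) : IntervalIntegrable (fun θ => supportFun (ballHull r {x, -x}) (unitDir θ))
      volume a b := (continuous_supportFun_unitDir hK).intervalIntegrable a b
  have h₁ := integral_supportFun_spindle_le hr hk τ
  have h₂ := integral_supportFun_spindle_le hr hk (τ + π)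
  rw [← hτ] at h₁
  rw [unitDir_add_pi, smul_neg, ← hτ, neg_neg, pair_comm, add_assoc, ← two_mul] at h₂
  have hcauchy := two_mul_intrinsicVolume_one_eq_integral_sub hV convex_ballHull hK
    ((insert_nonempty _ _).mono subset_ballHull) 0 τ
  simp only [inner_zero_left, sub_zero] at hcauchy
  rw [← intervalIntegral.integral_add_adjacent_intervals (hint _ (τ + π)) (hint _ _)] at hcauchy
  linarith

end Bounds

end Plane

theorem first_intrinsic_volume_spindle_le_general {r r₀ : ℝ} (hr : r₀ ≤ r)
    {P : Set (EuclideanSpace ℝ (Fin 2))}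
    (hcr : IsLeast {ρ : ℝ | ∃ c, P ⊆ closedBall c ρ} r₀)
    {V : ℕ → Set (EuclideanSpace ℝ (Fin 2)) → ℝ} (hV : IsIntrinsicVolumes 2 V)
    {x : EuclideanSpace ℝ (Fin 2)} (hx : ‖x‖ = r₀) :
    V 1 (ballHull r {x, -x}) ≤ V 1 (ballHull r P) := by
  have hr₀_nonneg : 0 ≤ r₀ := hx ▸ norm_nonneg x
  have hr_nonneg : 0 ≤ r := hr₀_nonneg.trans hr
  have hk : r₀ / r ∈ Icc 0 1 := ⟨div_nonneg hr₀_nonneg hr_nonneg, div_le_one_of_le₀ hr hr_nonneg⟩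
  have hrk : r * (r₀ / r) = r₀ := mul_div_cancel_of_imp' fun h => (h ▸ hr).antisymm hr₀_nonneg
  obtain ⟨c, hc⟩ := hcr.1
  have hcompact : IsCompact (closure P) := (isBounded_closedBall.subset hc).isCompact_closure
  have hcr' : IsLeast {ρ : ℝ | ∃ c, closure P ⊆ closedBall c ρ} (r * (r₀ / r)) := by
    simpa only [isClosed_closedBall.closure_subset_iff, hrk] using hcr
  calc V 1 (ballHull r {x, -x}) ≤ 2 * r * arcsin (r₀ / r) :=
        intrinsicVolume_spindle_le hV hr_nonneg hk (hx.trans hrk.symm)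
    _ ≤ V 1 (ballHull r (closure P)) :=
        two_mul_arcsin_le_intrinsicVolume_ballHull hV hr_nonneg hk hcompact hcr'
    _ = V 1 (ballHull r P) := by rw [ballHull_closure]

end

/-- In the plane, the r-spindle minimizes the first intrinsic volume among
r-ball convex hulls of finite sets of circumradius r₀. -/
theorem first_intrinsic_volume_spindle_le (r r₀ : ℝ) (hr : r₀ < r) (hr₀ : 0 < r₀)
    (P : Set (EuclideanSpace ℝ (Fin 2))) (hPfin : P.Finite) (hPne : P.Nonempty)
    (hcr : IsLeast {ρ : ℝ | ∃ cc : EuclideanSpace ℝ (Fin 2), P ⊆ closedBall cc ρ} r₀)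
    (V : ℕ → Set (EuclideanSpace ℝ (Fin 2)) → ℝ) (hV : IsIntrinsicVolumes 2 V)
    (x : EuclideanSpace ℝ (Fin 2)) (hx : ‖x‖ = r₀) :
    V 1 (ballHull r {x, -x}) ≤ V 1 (ballHull r P) :=
  first_intrinsic_volume_spindle_le_general hr.le hcr hV hx
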